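/- Let α ∈ (0,1). (a) For every complex ζ with ζ ∉ {0, αc, α/c, c, 1/c} and ζ⋆ ∉ {0, αc, α/c, c}, one has R₁⁴·𝒬(ζ⋆) = (ζ−1/c)⁴·𝒬(ζ). (b) For all real ξ, η and every such ζ, one has −R₁²·f(ζ⋆; ξ, η) = (ζ−1/c)²·f(ζ; ξ, ξ−η). -/

import Mathlib

/-!
The star operation is the Möbius involution exchanging `1/c` with `∞`, and it exchanges `p` with
`q` exactly when `(p - 1/c) * (q - 1/c) = R₁²`. The pairs `0 ↔ c`, `αc ↔ α/c`, `r₁ ↔ r₃` and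
`r₊ ↔ r₋` satisfy this relation, and `r₂` is a fixed point. Hence the divisor of `𝒬(ζ) dζ²` is
invariant, and the constant is found by multiplying out the factors pair by pair. Likewise
`f(ζ; ξ, η) dζ` is a differential with simple poles only; its pullback has the residues at exchanged
poles swapped, which amounts to replacing `η` by `ξ - η`, the residue at `1/c` being the former
residue at `∞`. The factors `R₁⁴` and `-R₁²` come from `dζ⋆ = -R₁² / (ζ - 1/c)² dζ`.
-/

open Complex

noncomputable def cc (α : ℝ) : ℝ := Real.sqrt (α / (1 - α + α ^ 2))
noncomputable def r1 (α : ℝ) : ℝ := -Real.sqrt α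
noncomputable def r2 (α : ℝ) : ℝ := Real.sqrt α * (α * cc α + Real.sqrt α) / (cc α + Real.sqrt α)
noncomputable def r3 (α : ℝ) : ℝ := Real.sqrt α * (cc α + Real.sqrt α) / (α * cc α + Real.sqrt α)
noncomputable def rp (α : ℝ) : ℂ :=
  (cc α : ℂ) * ((1 + (α : ℂ)) / 2 + Complex.I * (Real.sqrt 3 : ℂ) * ((1 - (α : ℂ)) / 2))
noncomputable def rm (α : ℝ) : ℂ :=
  (cc α : ℂ) * ((1 + (α : ℂ)) / 2 - Complex.I * (Real.sqrt 3 : ℂ) * ((1 - (α : ℂ)) / 2))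
noncomputable def R0 (α : ℝ) : ℝ := Real.sqrt α
noncomputable def Ra (α : ℝ) : ℝ := (1 - α) * Real.sqrt α
noncomputable def R1 (α : ℝ) : ℝ := (1 - α) / Real.sqrt α

/-- The rational function `𝒬` from equation (3.4) of the paper. -/
noncomputable def Qrat (α : ℝ) (ζ : ℂ) : ℂ :=
  ((ζ - (r1 α : ℂ)) ^ 2 * (ζ - (r2 α : ℂ)) ^ 2 * (ζ - (r3 α : ℂ)) ^ 2 *
    (ζ - rp α) * (ζ - rm α)) /
  (4 * ζ ^ 2 * (ζ - (α : ℂ) * (cc α : ℂ)) ^ 2 * (ζ - (α : ℂ) / (cc α : ℂ)) ^ 2 *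
    (ζ - (cc α : ℂ)) ^ 2 * (ζ - 1 / (cc α : ℂ)) ^ 2)

/-- The star operation `ζ⋆ = 1/c + R₁²/(ζ − 1/c)`. -/
noncomputable def star (α : ℝ) (ζ : ℂ) : ℂ :=
  1 / (cc α : ℂ) + ((R1 α : ℝ) : ℂ) ^ 2 / (ζ - 1 / (cc α : ℂ))

/-- The function `f(ζ; ξ, η)` from the proof of Proposition 6.4. -/
noncomputable def fsad (α ξ η : ℝ) (ζ : ℂ) : ℂ :=
  -(((ξ - η : ℝ) : ℂ) / 2) * (1 / ζ)
  + ((ξ : ℂ) / 2) * (1 / (ζ - (α : ℂ) * (cc α : ℂ)) + 1 / (ζ - (α : ℂ) / (cc α : ℂ)))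
  - ((η : ℂ) / 2) * (1 / (ζ - (cc α : ℂ)) + 1 / (ζ - 1 / (cc α : ℂ)))

section MobiusInversion

variable {K : Type*} [Field K] {w S p q z : K}

/-- The Möbius involution of the projective line over `K` exchanging `w` with `∞`, normalised so
that `(z - w) * (mobiusInversion w S z - w) = S`. At `z = w`, where the image is `∞`, it takes the
junk value `w`. -/
def mobiusInversion (w S z : K) : K := w + S / (z - w)

/-- The points `p` and `q` are exchanged by `mobiusInversion w S`, for `S ≠ 0`. The product
form is symmetric in `p` and `q` and avoids division. -/
def IsInversePair (w S p q : K) : Prop := (p - w) * (q - w) = S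

namespace IsInversePair

lemma symm (h : IsInversePair w S p q) : IsInversePair w S q p :=
  (mul_comm _ _).trans h

lemma right_ne (h : IsInversePair w S p q) (hS : S ≠ 0) : q ≠ w := by
  rintro rfl
  exact hS (by simpa [IsInversePair, eq_comm] using h)

lemma mobiusInversion_sub (h : IsInversePair w S p q) (hz : z ≠ w) :
    mobiusInversion w S z - q = -((q - w) * (z - p)) / (z - w) := by
  have hzw : z - w ≠ 0 := sub_ne_zero.2 hz
  rw [← show (p - w) * (q - w) = S from h, mobiusInversion]
  field_simp
  ring

lemma mobiusInversion_sub_mul_sub (h : IsInversePair w S p q) (hz : z ≠ w) :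
    (mobiusInversion w S z - p) * (mobiusInversion w S z - q) =
      S / (z - w) ^ 2 * ((z - p) * (z - q)) := by
  have hzw : z - w ≠ 0 := sub_ne_zero.2 hz
  rw [h.mobiusInversion_sub hz, h.symm.mobiusInversion_sub hz,
    ← show (p - w) * (q - w) = S from h]
  field_simp

/-- The form `dz / (z - q)` pulls back to a form with residue `1` at `p` and `-1` at `w`, the
preimage of `∞`. -/
lemma neg_mul_one_div_mobiusInversion_sub (h : IsInversePair w S p q) (hS : S ≠ 0)
    (hz : z ≠ w) (hzp : z ≠ p) :
    -S * (1 / (mobiusInversion w S z - q)) = (z - w) ^ 2 * (1 / (z - p) - 1 / (z - w)) := by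
  have hzw : z - w ≠ 0 := sub_ne_zero.2 hz
  have hzp' : z - p ≠ 0 := sub_ne_zero.2 hzp
  have hqw : q - w ≠ 0 := sub_ne_zero.2 (h.right_ne hS)
  rw [h.mobiusInversion_sub hz, ← show (p - w) * (q - w) = S from h]
  field_simp
  ring

end IsInversePair

lemma mobiusInversion_sub_center : mobiusInversion w S z - w = S / (z - w) :=
  add_sub_cancel_left _ _

lemma neg_mul_one_div_mobiusInversion_sub_center (hS : S ≠ 0) :
    -S * (1 / (mobiusInversion w S z - w)) = (z - w) ^ 2 * -(1 / (z - w)) := by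
  rw [mobiusInversion_sub_center]
  field_simp

end MobiusInversion

@[norm_cast]
lemma isInversePair_ofReal {w S p q : ℝ} :
    IsInversePair (w : ℂ) S p q ↔ IsInversePair w S p q := by
  unfold IsInversePair
  norm_cast

lemma star_eq_mobiusInversion (α : ℝ) (ζ : ℂ) :
    star α ζ = mobiusInversion (1 / (cc α : ℂ)) ((R1 α : ℂ) ^ 2) ζ :=
  rfl

section Parameters

variable {α : ℝ}

lemma one_sub_add_sq_pos (α : ℝ) : 0 < 1 - α + α ^ 2 := by
  linarith [sq_nonneg (α - 1 / 2)]

lemma cc_pos (hα : 0 < α) : 0 < cc α :=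
  Real.sqrt_pos.2 (div_pos hα (one_sub_add_sq_pos α))

lemma cc_sq (hα : 0 ≤ α) : cc α ^ 2 = α / (1 - α + α ^ 2) :=
  Real.sq_sqrt (div_nonneg hα (one_sub_add_sq_pos α).le)

lemma R1_ne_zero (hα : 0 < α) (hα1 : α ≠ 1) : R1 α ≠ 0 :=
  div_ne_zero (sub_ne_zero.2 hα1.symm) (Real.sqrt_pos.2 hα).ne'

lemma R1_sq (hα : 0 ≤ α) : R1 α ^ 2 = (1 - α) ^ 2 / α := by
  rw [R1, div_pow, Real.sq_sqrt hα]

lemma one_div_cc_sq (hα : 0 < α) : (1 / cc α) ^ 2 = 1 + R1 α ^ 2 := by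
  rw [div_pow, cc_sq hα.le, R1_sq hα.le]
  field_simp
  ring

lemma r2_eq (hα : 0 < α) : r2 α = 1 / cc α - R1 α := by
  have hc : 0 < cc α := cc_pos hα
  have hs_sq : √α ^ 2 = α := Real.sq_sqrt hα.le
  have hc_sq : cc α ^ 2 * (1 - α + α ^ 2) = α := by
    rw [cc_sq hα.le, div_mul_cancel₀ _ (one_sub_add_sq_pos α).ne']
  rw [r2, R1]
  field_simp
  linear_combination hc_sq + (α * cc α ^ 2 + cc α * √α - 1) * hs_sq

lemma r3_eq (hα : 0 < α) : r3 α = (cc α + √α) / (√α * cc α + 1) := by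
  have hs : 0 < √α := Real.sqrt_pos.2 hα
  have hfactor : α * cc α + √α = √α * (√α * cc α + 1) := by
    linear_combination -cc α * Real.sq_sqrt hα.le
  rw [r3, hfactor, mul_div_mul_left _ _ hs.ne']

lemma isInversePair_zero_cc (hα : 0 < α) :
    IsInversePair (1 / (cc α : ℂ)) ((R1 α : ℂ) ^ 2) 0 (cc α) := by
  norm_cast
  have hc : 1 / cc α * cc α = 1 := one_div_mul_cancel (cc_pos hα).ne'
  unfold IsInversePair
  linear_combination one_div_cc_sq hα - hc

lemma isInversePair_mul_cc_div_cc (hα : 0 < α) :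
    IsInversePair (1 / (cc α : ℂ)) ((R1 α : ℂ) ^ 2) (α * cc α) (α / cc α) := by
  norm_cast
  have hc : 1 / cc α * cc α = 1 := one_div_mul_cancel (cc_pos hα).ne'
  have hR : α * R1 α ^ 2 = (1 - α) ^ 2 := by rw [R1_sq hα.le, mul_div_cancel₀ _ hα.ne']
  unfold IsInversePair
  linear_combination (α ^ 2 - α) * hc + (1 - α) * one_div_cc_sq hα - hR

lemma isInversePair_r1_r3 (hα : 0 < α) :
    IsInversePair (1 / (cc α : ℂ)) ((R1 α : ℂ) ^ 2) (r1 α) (r3 α) := by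
  norm_cast
  have hc : 0 < cc α := cc_pos hα
  have hden : √α * cc α + 1 ≠ 0 := by positivity
  rw [IsInversePair, r1, r3_eq hα, ← sub_eq_of_eq_add' (one_div_cc_sq hα)]
  field_simp
  ring

lemma isInversePair_r2_r2 (hα : 0 < α) :
    IsInversePair (1 / (cc α : ℂ)) ((R1 α : ℂ) ^ 2) (r2 α) (r2 α) := by
  norm_cast
  rw [IsInversePair, r2_eq hα]
  ring

lemma rp_add_rm (α : ℝ) : rp α + rm α = cc α * (1 + α) := by
  unfold rp rm
  ring

lemma rp_mul_rm (hα : 0 ≤ α) : rp α * rm α = α := by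
  have hsqrt3 : ((√3 : ℝ) : ℂ) ^ 2 = 3 := by
    exact_mod_cast Real.sq_sqrt (show (0 : ℝ) ≤ 3 by norm_num)
  have hc : (cc α : ℂ) ^ 2 * (1 - α + α ^ 2) = α := by
    exact_mod_cast (eq_div_iff (one_sub_add_sq_pos α).ne').1 (cc_sq hα)
  calc rp α * rm α
      = cc α ^ 2 * (((1 + α) / 2) ^ 2 - I ^ 2 * (√3 : ℝ) ^ 2 * ((1 - α) / 2) ^ 2) := by
        unfold rp rm
        ring
    _ = cc α ^ 2 * (1 - α + α ^ 2) := by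
        rw [I_sq, hsqrt3]
        ring
    _ = α := hc

lemma isInversePair_rp_rm (hα : 0 < α) :
    IsInversePair (1 / (cc α : ℂ)) ((R1 α : ℂ) ^ 2) (rp α) (rm α) := by
  have hc : 1 / (cc α : ℂ) * cc α = 1 := one_div_mul_cancel (mod_cast (cc_pos hα).ne')
  have hw : (1 / (cc α : ℂ)) ^ 2 = 1 + (R1 α : ℂ) ^ 2 := mod_cast one_div_cc_sq hα
  unfold IsInversePair
  linear_combination rp_mul_rm hα.le - 1 / (cc α : ℂ) * rp_add_rm α - (1 + (α : ℂ)) * hc + hw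

end Parameters

section Symmetries

variable {α : ℝ} {ζ : ℂ}

lemma Qrat_eq_pairs (α : ℝ) (ζ : ℂ) :
    Qrat α ζ =
      (((ζ - r1 α) * (ζ - r3 α)) ^ 2 * ((ζ - r2 α) * (ζ - r2 α)) * ((ζ - rp α) * (ζ - rm α))) /
        (4 * ((ζ - 0) * (ζ - cc α)) ^ 2 * ((ζ - α * cc α) * (ζ - α / cc α)) ^ 2 *
          (ζ - 1 / cc α) ^ 2) := by
  unfold Qrat
  congr 1 <;> ring

theorem Qrat_star (hα : 0 < α) (hα1 : α ≠ 1) (hζ : ζ ≠ 1 / (cc α : ℂ)) :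
    (R1 α : ℂ) ^ 4 * Qrat α (star α ζ) = (ζ - 1 / (cc α : ℂ)) ^ 4 * Qrat α ζ := by
  have hR : (R1 α : ℂ) ≠ 0 := mod_cast R1_ne_zero hα hα1
  have hζw : ζ - 1 / (cc α : ℂ) ≠ 0 := sub_ne_zero.2 hζ
  rw [Qrat_eq_pairs, Qrat_eq_pairs, star_eq_mobiusInversion,
    (isInversePair_r1_r3 hα).mobiusInversion_sub_mul_sub hζ,
    (isInversePair_r2_r2 hα).mobiusInversion_sub_mul_sub hζ,
    (isInversePair_rp_rm hα).mobiusInversion_sub_mul_sub hζ,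
    (isInversePair_zero_cc hα).mobiusInversion_sub_mul_sub hζ,
    (isInversePair_mul_cc_div_cc hα).mobiusInversion_sub_mul_sub hζ,
    mobiusInversion_sub_center]
  generalize 1 / (cc α : ℂ) = w at hζw ⊢
  field_simp

theorem fsad_star (hα : 0 < α) (hα1 : α ≠ 1)
    (hζ : ζ ∉ ({0, (α : ℂ) * (cc α : ℂ), (α : ℂ) / (cc α : ℂ), (cc α : ℂ),
      1 / (cc α : ℂ)} : Set ℂ)) (ξ η : ℝ) :
    -(R1 α : ℂ) ^ 2 * fsad α ξ η (star α ζ) =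
      (ζ - 1 / (cc α : ℂ)) ^ 2 * fsad α ξ (ξ - η) ζ := by
  simp only [Set.mem_insert_iff, Set.mem_singleton_iff, not_or] at hζ
  obtain ⟨hζ0, hζαc, hζαdc, hζc, hζw⟩ := hζ
  have hR : (R1 α : ℂ) ^ 2 ≠ 0 := pow_ne_zero 2 (mod_cast R1_ne_zero hα hα1)
  have h0c := isInversePair_zero_cc hα
  have hαc := isInversePair_mul_cc_div_cc hα
  have pullback_zero := h0c.symm.neg_mul_one_div_mobiusInversion_sub hR hζw hζc
  have pullback_c := h0c.neg_mul_one_div_mobiusInversion_sub hR hζw hζ0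
  have pullback_mul := hαc.symm.neg_mul_one_div_mobiusInversion_sub hR hζw hζαdc
  have pullback_div := hαc.neg_mul_one_div_mobiusInversion_sub hR hζw hζαc
  have pullback_center :=
    neg_mul_one_div_mobiusInversion_sub_center (w := 1 / (cc α : ℂ)) (z := ζ) hR
  rw [sub_zero] at pullback_zero pullback_c
  rw [fsad, fsad, star_eq_mobiusInversion]
  push_cast
  linear_combination -((ξ - η : ℂ) / 2) * pullback_zero
    + (ξ : ℂ) / 2 * (pullback_mul + pullback_div)
    - (η : ℂ) / 2 * (pullback_c + pullback_center)

theorem Q_and_f_star_symmetry_general (hα : 0 < α) (hα1 : α ≠ 1)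
    (hζ : ζ ∉ ({0, (α : ℂ) * (cc α : ℂ), (α : ℂ) / (cc α : ℂ), (cc α : ℂ),
      1 / (cc α : ℂ)} : Set ℂ)) :
    (R1 α : ℂ) ^ 4 * Qrat α (star α ζ) = (ζ - 1 / (cc α : ℂ)) ^ 4 * Qrat α ζ ∧
    ∀ ξ η : ℝ,
      -(R1 α : ℂ) ^ 2 * fsad α ξ η (star α ζ) =
        (ζ - 1 / (cc α : ℂ)) ^ 2 * fsad α ξ (ξ - η) ζ :=
  ⟨Qrat_star hα hα1 fun h => hζ (by simp [h]), fsad_star hα hα1 hζ⟩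

end Symmetries

/-- The symmetries (6.14) of the paper: `R₁⁴ 𝒬(ζ⋆) = (ζ−1/c)⁴ 𝒬(ζ)` and
`−R₁² f(ζ⋆; ξ, η) = (ζ−1/c)² f(ζ; ξ, ξ−η)`. -/
theorem Q_and_f_star_symmetry (α : ℝ) (hα0 : 0 < α) (hα1 : α < 1) (ζ : ℂ)
    (hζ : ζ ∉ ({0, (α : ℂ) * (cc α : ℂ), (α : ℂ) / (cc α : ℂ), ((cc α : ℂ)),
        1 / (cc α : ℂ)} : Set ℂ))
    (hstar : star α ζ ∉ ({0, (α : ℂ) * (cc α : ℂ), (α : ℂ) / (cc α : ℂ),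
        ((cc α : ℂ))} : Set ℂ)) :
    ((R1 α : ℂ)) ^ 4 * Qrat α (star α ζ) = (ζ - 1 / (cc α : ℂ)) ^ 4 * Qrat α ζ ∧
    ∀ ξ η : ℝ,
      -((R1 α : ℂ)) ^ 2 * fsad α ξ η (star α ζ) =
        (ζ - 1 / (cc α : ℂ)) ^ 2 * fsad α ξ (ξ - η) ζ :=
  Q_and_f_star_symmetry_general hα0 hα1.ne hζ
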